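/- Let r ≤ t and let H be an (r,t)-blowup of a tree with h vertices. There exist constants c, c' > 0 such that every n-vertex graph G with ∑_{v∈V(G)} d(v)^r ≥ c n^r contains at least c' n^h (2e(G)/n²)^{e(H)} (labeled, injective) copies of H. In particular, ex(n, H) = O(n^{2−1/r}). -/

import Mathlib

/-- A block representation `(B₀, B₁, …, B_m, P)` of a tree-degenerate bipartite graph
`H`: the blocks `B i` are nonempty and partition `V(H)`; `B₁` is completely joined to
its parent set `P 1 = B₀`; for each `2 ≤ i ≤ m`, the block `B i` is completely joined
to its parent set `P i`, a subset of an earlier block `B (γ i)` with `1 ≤ γ i < i` and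
`|P (γ i)| ≤ |P i|`; and these joins account for all edges of `H`. -/
structure BlockRep {VH : Type} [Fintype VH] [DecidableEq VH]
    (H : SimpleGraph VH) (m : ℕ) where
  hm : 1 ≤ m
  B : Fin (m + 1) → Finset VH
  P : Fin (m + 1) → Finset VH
  γ : Fin (m + 1) → Fin (m + 1)
  B_nonempty : ∀ i, (B i).Nonempty
  partition : ∀ v : VH, ∃! i, v ∈ B i
  P_one : P 1 = B 0
  γ_lt : ∀ i : Fin (m + 1), 2 ≤ (i : ℕ) → 1 ≤ ((γ i : ℕ)) ∧ (γ i : ℕ) < (i : ℕ)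
  P_subset : ∀ i : Fin (m + 1), 2 ≤ (i : ℕ) → P i ⊆ B (γ i)
  P_card_mono : ∀ i : Fin (m + 1), 2 ≤ (i : ℕ) → (P (γ i)).card ≤ (P i).card
  adj_iff : ∀ u v : VH, H.Adj u v ↔
    ∃ i : Fin (m + 1), 1 ≤ (i : ℕ) ∧
      ((u ∈ P i ∧ v ∈ B i) ∨ (v ∈ P i ∧ u ∈ B i))

/-!
Call an `r`-tuple `x` of vertices of `G` *bad* if it has a repeated entry, if it has few common
neighbours compared with the average `D` over all `r`-tuples, or, recursively, if too many of the
`r`-tuples inside its common neighbourhood `N(x)` are bad. Weight `x` by `|N(x)| ^ r`, which counts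
the `r`-tuples `y` joined to it. Since this relation between `x` and `y` is symmetric, Markov's
inequality bounds the weight of the new bad tuples at each level of the recursion by a constant
times the weight of the old ones, so at every bounded level the bad tuples carry at most half of
the total weight once `D` is large.

Starting from a root tuple that is not bad, `H` can then be embedded block by block: a parent tuple
`x` that is not bad has order of `D` common neighbours, and at least half of all maps of the
block into `N(x)` are injective, avoid the vertices already used and contain no bad parent tuple.
This yields a constant multiple of `n ^ r * D ^ (h - r)` copies. The power mean inequality gives
`n * q ^ r ≤ D` for `q = 2 e(G) / n ^ 2`, and `q ≤ 1`, `r * (h - r) ≤ e(H)`, so this is at least a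
constant multiple of `n ^ h * q ^ e(H)`.
-/

open Finset
open scoped BigOperators

section PowerMean

variable {α : Type*} [Fintype α] {f : α → ℝ}

theorem expect_mul_sum_pow_le (hf : ∀ a, 0 ≤ f a) (n : ℕ) :
    (𝔼 a, f a) * ∑ a, f a ^ n ≤ ∑ a, f a ^ (n + 1) := by
  rcases isEmpty_or_nonempty α with _ | _
  · simp
  have hmono : Monovary f fun a => f a ^ n := fun i j hij =>
    (lt_of_pow_lt_pow_left₀ n (hf j) hij).le
  rw [Fintype.expect_eq_sum_div_card, div_mul_eq_mul_div, div_le_iff₀ (by positivity), mul_comm _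
    (Fintype.card α : ℝ)]
  simpa only [pow_succ'] using hmono.sum_mul_sum_le_card_mul_sum

theorem expect_pow_mul_card_le (hf : ∀ a, 0 ≤ f a) (n : ℕ) :
    (𝔼 a, f a) ^ n * Fintype.card α ≤ ∑ a, f a ^ n := by
  induction n with
  | zero => simp
  | succ n ih =>
    have hmean : 0 ≤ 𝔼 a, f a := expect_nonneg fun a _ => hf a
    calc (𝔼 a, f a) ^ (n + 1) * Fintype.card α
        = (𝔼 a, f a) * ((𝔼 a, f a) ^ n * Fintype.card α) := by ring
      _ ≤ (𝔼 a, f a) * ∑ a, f a ^ n := by gcongr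
      _ ≤ ∑ a, f a ^ (n + 1) := expect_mul_sum_pow_le hf n

end PowerMean

section TupleCounting

variable {α ι κ : Type*} [DecidableEq α] [Fintype ι] [DecidableEq ι]

theorem card_filter_apply_eq_apply_le (S : Finset α) {a b : ι} (hab : a ≠ b) :
    #{g ∈ Fintype.piFinset fun _ : ι => S | g a = g b} ≤ #S ^ (Fintype.card ι - 1) := by
  have hcard : #(Fintype.piFinset fun _ : {i // i ≠ b} => S) = #S ^ (Fintype.card ι - 1) := by
    simp
  rw [← hcard]
  refine card_le_card_of_injOn (fun g i => g i) (fun g hg => ?_) fun g hg g' hg' h => ?_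
  · simp only [coe_filter, Fintype.mem_piFinset, Set.mem_ofPred_eq] at hg
    exact mem_coe.2 (Fintype.mem_piFinset.2 fun i => hg.1 i)
  · simp only [coe_filter, Set.mem_ofPred_eq] at hg hg'
    have heq : ∀ i ≠ b, g i = g' i := fun i hi => congrFun h ⟨i, hi⟩
    funext i
    by_cases hi : i = b
    · rw [hi, ← hg.2, ← hg'.2, heq a hab]
    · exact heq i hi

theorem card_filter_not_injective_le (S : Finset α) :
    #{g ∈ Fintype.piFinset fun _ : ι => S | ¬ Function.Injective g} ≤
      Fintype.card ι ^ 2 * #S ^ (Fintype.card ι - 1) := by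
  have hsub : {g ∈ Fintype.piFinset fun _ : ι => S | ¬ Function.Injective g} ⊆
      (univ.filter fun q : ι × ι => q.1 ≠ q.2).biUnion fun q =>
        {g ∈ Fintype.piFinset fun _ : ι => S | g q.1 = g q.2} := by
    intro g hg
    obtain ⟨hgS, hg⟩ := mem_filter.1 hg
    obtain ⟨a, b, hgab, hab⟩ := Function.not_injective_iff.1 hg
    exact mem_biUnion.2 ⟨(a, b), by simpa using hab, mem_filter.2 ⟨hgS, hgab⟩⟩
  refine (card_le_card hsub).trans <| (card_biUnion_le_card_mul _ _ _ fun q hq =>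
    card_filter_apply_eq_apply_le S (mem_filter.1 hq).2).trans ?_
  gcongr
  simpa [sq] using card_filter_le (univ : Finset (ι × ι)) fun q => q.1 ≠ q.2

theorem card_filter_exists_apply_mem_le (S F : Finset α) :
    #{g ∈ Fintype.piFinset fun _ : ι => S | ∃ a, g a ∈ F} ≤
      Fintype.card ι * #F * #S ^ (Fintype.card ι - 1) := by
  have hsub : {g ∈ Fintype.piFinset fun _ : ι => S | ∃ a, g a ∈ F} ⊆
      (univ ×ˢ F : Finset (ι × α)).biUnion fun q =>
        {g ∈ Fintype.piFinset fun _ : ι => S | g q.1 = q.2} := by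
    intro g hg
    obtain ⟨hgS, a, ha⟩ := mem_filter.1 hg
    exact mem_biUnion.2 ⟨(a, g a), by simpa using ha, mem_filter.2 ⟨hgS, rfl⟩⟩
  refine (card_le_card hsub).trans <|
    (card_biUnion_le_card_mul _ _ (#S ^ (Fintype.card ι - 1)) fun q _ => ?_).trans_eq (by simp)
  rw [Fintype.card_filter_piFinset_const]
  split_ifs <;> simp

theorem card_filter_comp_mem_le [Fintype κ] [DecidableEq κ] (S : Finset α) (e : κ ↪ ι)
    (T : Finset (κ → α)) :
    #{g ∈ Fintype.piFinset fun _ : ι => S | g ∘ e ∈ T} ≤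
      #{y ∈ Fintype.piFinset fun _ : κ => S | y ∈ T} *
        #S ^ (Fintype.card ι - Fintype.card κ) := by
  have hcompl : #S ^ (Fintype.card ι - Fintype.card κ) =
      #(Fintype.piFinset fun _ : {i // i ∉ Set.range e} => S) := by
    rw [Fintype.card_piFinset, prod_const, card_univ, Fintype.card_subtype_compl,
      ← Fintype.card_congr (Equiv.ofInjective e e.injective)]
  rw [hcompl, ← card_product]
  refine card_le_card_of_injOn (fun g => (g ∘ e, fun i => g i.1)) (fun g hg => ?_)
    fun g _ g' _ h => ?_
  · simp only [coe_filter, Fintype.mem_piFinset, Set.mem_ofPred_eq] at hg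
    simp only [mem_coe, mem_product, mem_filter, Fintype.mem_piFinset]
    exact ⟨⟨fun a => hg.1 _, hg.2⟩, fun i => hg.1 _⟩
  · simp only [Prod.mk.injEq] at h
    funext i
    by_cases hi : i ∈ Set.range e
    · obtain ⟨a, rfl⟩ := hi
      exact congrFun h.1 a
    · exact congrFun h.2 ⟨i, hi⟩

theorem card_filter_exists_comp_mem_le [Fintype κ] [DecidableEq κ] {J : Type*} [Fintype J]
    (S : Finset α) (e : J → κ ↪ ι) (T : Finset (κ → α)) {δ : ℝ}
    (hT : (#{y ∈ Fintype.piFinset fun _ : κ => S | y ∈ T} : ℝ) ≤ δ * #S ^ Fintype.card κ) :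
    (#{g ∈ Fintype.piFinset fun _ : ι => S | ∃ j, g ∘ e j ∈ T} : ℝ) ≤
      Fintype.card J * δ * #S ^ Fintype.card ι := by
  have hsub : {g ∈ Fintype.piFinset fun _ : ι => S | ∃ j, g ∘ e j ∈ T} ⊆
      univ.biUnion fun j => {g ∈ Fintype.piFinset fun _ : ι => S | g ∘ e j ∈ T} := by
    intro g hg
    obtain ⟨hgS, j, hj⟩ := mem_filter.1 hg
    exact mem_biUnion.2 ⟨j, mem_univ j, mem_filter.2 ⟨hgS, hj⟩⟩
  have hone (j : J) : (#{g ∈ Fintype.piFinset fun _ : ι => S | g ∘ e j ∈ T} : ℝ) ≤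
      δ * #S ^ Fintype.card ι :=
    calc (#{g ∈ Fintype.piFinset fun _ : ι => S | g ∘ e j ∈ T} : ℝ)
        ≤ #{y ∈ Fintype.piFinset fun _ : κ => S | y ∈ T} *
            #S ^ (Fintype.card ι - Fintype.card κ) :=
          mod_cast card_filter_comp_mem_le S (e j) T
      _ ≤ δ * #S ^ Fintype.card κ * #S ^ (Fintype.card ι - Fintype.card κ) := by gcongr
      _ = δ * #S ^ Fintype.card ι := by
          rw [mul_assoc, ← pow_add, Nat.add_sub_of_le (Fintype.card_le_of_embedding (e j))]
  calc (#{g ∈ Fintype.piFinset fun _ : ι => S | ∃ j, g ∘ e j ∈ T} : ℝ)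
      ≤ ∑ j, (#{g ∈ Fintype.piFinset fun _ : ι => S | g ∘ e j ∈ T} : ℝ) :=
        mod_cast (card_le_card hsub).trans card_biUnion_le
    _ ≤ ∑ _j : J, δ * (#S : ℝ) ^ Fintype.card ι := sum_le_sum fun j _ => hone j
    _ = Fintype.card J * δ * #S ^ Fintype.card ι := by
        rw [sum_const, nsmul_eq_mul, card_univ, mul_assoc]

theorem half_card_pow_le_card_injective_avoiding [Fintype κ] [DecidableEq κ] {J : Type*}
    [Fintype J] (S F : Finset α) (e : J → κ ↪ ι) (T : Finset (κ → α)) {δ : ℝ}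
    (hT : (#{y ∈ Fintype.piFinset fun _ : κ => S | y ∈ T} : ℝ) ≤ δ * #S ^ Fintype.card κ)
    (hδ : Fintype.card J * δ ≤ 1 / 4)
    (hS : 4 * (Fintype.card ι * (Fintype.card ι + #F)) ≤ #S) :
    (#S : ℝ) ^ Fintype.card ι / 2 ≤
      #{g ∈ Fintype.piFinset fun _ : ι => S |
        Function.Injective g ∧ (∀ a, g a ∉ F) ∧ ∀ j, g ∘ e j ∉ T} := by
  set P := Fintype.piFinset fun _ : ι => S
  have hP : #P = #S ^ Fintype.card ι := by simp [P]
  have hcover : P ⊆ {g ∈ P | Function.Injective g ∧ (∀ a, g a ∉ F) ∧ ∀ j, g ∘ e j ∉ T} ∪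
      ({g ∈ P | ¬ Function.Injective g} ∪
        ({g ∈ P | ∃ a, g a ∈ F} ∪ {g ∈ P | ∃ j, g ∘ e j ∈ T})) := by
    intro g hg
    simp only [mem_union, mem_filter, hg, true_and, ← not_exists]
    tauto
  have hsum := (card_le_card hcover).trans <| (card_union_le _ _).trans <|
    Nat.add_le_add_left ((card_union_le _ _).trans <|
      Nat.add_le_add_left (card_union_le _ _) _) _
  have hcollide : 4 * (#{g ∈ P | ¬ Function.Injective g} + #{g ∈ P | ∃ a, g a ∈ F}) ≤
      #S ^ Fintype.card ι := by
    rcases Nat.eq_zero_or_pos (Fintype.card ι) with h0 | hpos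
    · have hnoninj := card_filter_not_injective_le (ι := ι) S
      have hhit := card_filter_exists_apply_mem_le (ι := ι) S F
      simp only [h0, zero_pow two_ne_zero, zero_mul, Nat.le_zero] at hnoninj hhit
      rw [hnoninj, hhit]
      exact Nat.zero_le _
    · calc 4 * (#{g ∈ P | ¬ Function.Injective g} + #{g ∈ P | ∃ a, g a ∈ F})
          ≤ 4 * (Fintype.card ι ^ 2 * #S ^ (Fintype.card ι - 1) +
              Fintype.card ι * #F * #S ^ (Fintype.card ι - 1)) := by
            gcongr
            exacts [card_filter_not_injective_le S, card_filter_exists_apply_mem_le S F]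
        _ = 4 * (Fintype.card ι * (Fintype.card ι + #F)) * #S ^ (Fintype.card ι - 1) := by ring
        _ ≤ #S * #S ^ (Fintype.card ι - 1) := by gcongr
        _ = #S ^ Fintype.card ι := mul_pow_sub_one hpos.ne' _
  have hbad : (#{g ∈ P | ∃ j, g ∘ e j ∈ T} : ℝ) ≤ 1 / 4 * #S ^ Fintype.card ι :=
    (card_filter_exists_comp_mem_le S e T hT).trans (by gcongr)
  rw [hP] at hsum
  rify at hsum hcollide
  linarith

end TupleCounting

section CommonNeighbourhoods

variable {W : Type*} [Fintype W] (G : SimpleGraph W) [DecidableRel G.Adj]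

/-- The common neighbourhood in `G` of the vertices listed by the tuple `x`. -/
def commonNbhd {κ : Type*} [Fintype κ] (x : κ → W) : Finset W := {w | ∀ j, G.Adj (x j) w}

/-- The average size of the common neighbourhood of an `r`-tuple of vertices, over all
`|W| ^ r` tuples, including those with repeated entries. -/
noncomputable def meanCodegree (r : ℕ) : ℝ := 𝔼 x : Fin r → W, (#(commonNbhd G x) : ℝ)

variable {G} in
@[simp]
theorem mem_commonNbhd {κ : Type*} [Fintype κ] {x : κ → W} {w : W} :
    w ∈ commonNbhd G x ↔ ∀ j, G.Adj (x j) w := by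
  simp [commonNbhd]

theorem meanCodegree_nonneg (r : ℕ) : 0 ≤ meanCodegree G r :=
  expect_nonneg fun _ _ => Nat.cast_nonneg _

theorem sum_card_filter_mem_commonNbhd {ι κ : Type*} [Fintype ι] [DecidableEq ι] [Fintype κ]
    [DecidableEq κ] [DecidableEq W] (T : Finset (ι → W)) :
    ∑ x : κ → W, #{y ∈ Fintype.piFinset fun _ : ι => commonNbhd G x | y ∈ T} =
      ∑ y ∈ T, #(commonNbhd G y) ^ Fintype.card κ := by
  have hcount := sum_card_bipartiteAbove_eq_sum_card_bipartiteBelow (s := univ) (t := T)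
    fun (x : κ → W) (y : ι → W) => ∀ i j, G.Adj (x i) (y j)
  have habove (x : κ → W) : {y ∈ Fintype.piFinset fun _ : ι => commonNbhd G x | y ∈ T} =
      bipartiteAbove (fun x y => ∀ i j, G.Adj (x i) (y j)) T x := by
    ext y
    simp only [mem_filter, Fintype.mem_piFinset, mem_commonNbhd, mem_bipartiteAbove]
    rw [and_comm, forall_comm]
  have hbelow (y : ι → W) : #(commonNbhd G y) ^ Fintype.card κ =
      #(bipartiteBelow (fun x y => ∀ i j, G.Adj (x i) (y j)) (univ : Finset (κ → W)) y) := by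
    rw [← card_univ, ← prod_const, ← Fintype.card_piFinset]
    congr 1
    ext x
    simp [G.adj_comm]
  simpa only [habove, hbelow] using hcount

theorem sum_card_commonNbhd (κ : Type*) [Fintype κ] [DecidableEq κ] :
    ∑ x : κ → W, #(commonNbhd G x) = ∑ v, G.degree v ^ Fintype.card κ := by
  classical
  calc ∑ x : κ → W, #(commonNbhd G x)
      = ∑ x : κ → W, #{y ∈ Fintype.piFinset fun _ : Unit => commonNbhd G x | y ∈ univ} := by
        simp
    _ = ∑ y : Unit → W, #(commonNbhd G y) ^ Fintype.card κ :=
        sum_card_filter_mem_commonNbhd G univ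
    _ = ∑ v, G.degree v ^ Fintype.card κ := by
        refine Fintype.sum_equiv (Equiv.funUnique Unit W) _ _ fun y => ?_
        rw [← G.card_neighborFinset_eq_degree]
        congr 2
        ext w
        rw [mem_commonNbhd, SimpleGraph.mem_neighborFinset]
        exact Unique.forall_iff

theorem meanCodegree_eq_sum_degree_pow_div (r : ℕ) :
    meanCodegree G r = (∑ v, (G.degree v : ℝ) ^ r) / (Fintype.card W : ℝ) ^ r := by
  have hsum := sum_card_commonNbhd G (Fin r)
  rw [Fintype.card_fin] at hsum
  rify at hsum
  rw [meanCodegree, Fintype.expect_eq_sum_div_card, hsum]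
  simp

theorem card_mul_density_pow_le_meanCodegree (r : ℕ) :
    (Fintype.card W : ℝ) * (2 * (#G.edgeFinset : ℝ) / (Fintype.card W : ℝ) ^ 2) ^ r ≤
      meanCodegree G r := by
  rcases isEmpty_or_nonempty W with _ | _
  · simpa using meanCodegree_nonneg G r
  have hmean : 𝔼 v, (G.degree v : ℝ) = 2 * #G.edgeFinset / Fintype.card W := by
    rw [Fintype.expect_eq_sum_div_card]
    exact_mod_cast congrArg (fun s : ℕ => (s : ℝ) / Fintype.card W)
      G.sum_degrees_eq_twice_card_edges
  have hpow := expect_pow_mul_card_le (f := fun v => (G.degree v : ℝ))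
    (fun v => Nat.cast_nonneg _) r
  rw [meanCodegree_eq_sum_degree_pow_div, le_div_iff₀ (by positivity)]
  calc (Fintype.card W : ℝ) * (2 * #G.edgeFinset / (Fintype.card W : ℝ) ^ 2) ^ r *
        (Fintype.card W : ℝ) ^ r
      = (2 * #G.edgeFinset / Fintype.card W) ^ r * Fintype.card W := by
        rw [mul_assoc, ← mul_pow, mul_comm]
        congr 2
        field_simp
    _ ≤ ∑ v, (G.degree v : ℝ) ^ r := hmean ▸ hpow

theorem two_mul_card_edgeFinset_div_sq_le_one :
    2 * (#G.edgeFinset : ℝ) / (Fintype.card W : ℝ) ^ 2 ≤ 1 := by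
  have hsum : 2 * #G.edgeFinset ≤ Fintype.card W * Fintype.card W := by
    rw [← G.sum_degrees_eq_twice_card_edges]
    simpa using sum_le_card_nsmul univ (fun v => G.degree v) (Fintype.card W)
      fun v _ => (G.degree_lt_card_verts v).le
  refine div_le_one_of_le₀ ?_ (by positivity)
  rw [sq]
  exact_mod_cast hsum

variable {r : ℕ}

theorem card_edgeFinset_le_of_meanCodegree_le (hr : r ≠ 0) {c : ℝ} (hc : meanCodegree G r ≤ c) :
    (#G.edgeFinset : ℝ) ≤
      c ^ (1 / r : ℝ) * (Fintype.card W : ℝ) ^ ((2 : ℝ) - 1 / r) := by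
  have hc₀ : 0 ≤ c := (meanCodegree_nonneg G r).trans hc
  rcases isEmpty_or_nonempty W with _ | _
  · rw [Subsingleton.elim G.edgeFinset ∅, card_empty, Nat.cast_zero]
    positivity
  have hn : (0 : ℝ) < Fintype.card W := Nat.cast_pos.2 Fintype.card_pos
  have hdensity : 2 * (#G.edgeFinset : ℝ) / (Fintype.card W : ℝ) ^ 2 ≤
      (c / Fintype.card W) ^ (1 / r : ℝ) := by
    rw [one_div, ← Real.pow_rpow_inv_natCast (by positivity : (0 : ℝ) ≤ 2 * #G.edgeFinset / _) hr]
    gcongr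
    rw [le_div_iff₀' hn]
    exact (card_mul_density_pow_le_meanCodegree G r).trans hc
  rw [div_le_iff₀ (by positivity)] at hdensity
  calc (#G.edgeFinset : ℝ) ≤ 2 * #G.edgeFinset := le_mul_of_one_le_left (by positivity) one_le_two
    _ ≤ (c / Fintype.card W) ^ (1 / r : ℝ) * (Fintype.card W : ℝ) ^ 2 := hdensity
    _ = c ^ (1 / r : ℝ) * (Fintype.card W : ℝ) ^ ((2 : ℝ) - 1 / r) := by
        rw [Real.div_rpow hc₀ hn.le, Real.rpow_sub hn, Real.rpow_two]
        ring

theorem sum_pow_filter_card_commonNbhd_lt_le (hr : r ≠ 0) {ε : ℝ} (hε : 0 ≤ ε) (hε1 : ε ≤ 1) :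
    ∑ x : Fin r → W with (#(commonNbhd G x) : ℝ) < ε * meanCodegree G r,
        (#(commonNbhd G x) : ℝ) ^ r ≤
      ε * ∑ x : Fin r → W, (#(commonNbhd G x) : ℝ) ^ r := by
  have hD := meanCodegree_nonneg G r
  calc ∑ x : Fin r → W with (#(commonNbhd G x) : ℝ) < ε * meanCodegree G r,
        (#(commonNbhd G x) : ℝ) ^ r
      ≤ ∑ x : Fin r → W with (#(commonNbhd G x) : ℝ) < ε * meanCodegree G r,
          (ε * meanCodegree G r) ^ r := by
        refine sum_le_sum fun x hx => ?_
        have hlt := (mem_filter.1 hx).2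
        gcongr
    _ ≤ ∑ _x : Fin r → W, (ε * meanCodegree G r) ^ r :=
        sum_le_sum_of_subset_of_nonneg (filter_subset _ _) fun _ _ _ => by positivity
    _ = ε ^ r * (meanCodegree G r ^ r * Fintype.card (Fin r → W)) := by
        rw [sum_const, nsmul_eq_mul, card_univ, mul_pow]
        ring
    _ ≤ ε * ∑ x : Fin r → W, (#(commonNbhd G x) : ℝ) ^ r := by
        gcongr
        · exact pow_le_of_le_one hε hε1 hr
        · exact expect_pow_mul_card_le (fun _ => Nat.cast_nonneg _) r

end CommonNeighbourhoods

section BadTuples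

theorem sum_union_le_add {α : Type*} [DecidableEq α] (s t : Finset α) {f : α → ℝ}
    (hf : ∀ a, 0 ≤ f a) : ∑ a ∈ s ∪ t, f a ≤ ∑ a ∈ s, f a + ∑ a ∈ t, f a := by
  rw [← sum_union_inter]
  exact le_add_of_nonneg_right (sum_nonneg fun a _ => hf a)

variable {W : Type*} [Fintype W] [DecidableEq W] (G : SimpleGraph W) [DecidableRel G.Adj] {r : ℕ}

theorem meanCodegree_mul_sum_not_injective_le (hr : r ≠ 0) :
    meanCodegree G r * ∑ x : Fin r → W with ¬ Function.Injective x, (#(commonNbhd G x) : ℝ) ^ r ≤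
      (r : ℝ) ^ 2 * ∑ x : Fin r → W, (#(commonNbhd G x) : ℝ) ^ r := by
  have hcount : ∑ x : Fin r → W with ¬ Function.Injective x, #(commonNbhd G x) ^ r ≤
      ∑ y : Fin r → W, r ^ 2 * #(commonNbhd G y) ^ (r - 1) := by
    have hdouble := sum_card_filter_mem_commonNbhd G (κ := Fin r)
      (univ.filter fun x : Fin r → W => ¬ Function.Injective x)
    rw [Fintype.card_fin] at hdouble
    rw [← hdouble]
    refine sum_le_sum fun y _ => ?_
    simpa using card_filter_not_injective_le (ι := Fin r) (commonNbhd G y)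
  have hmean := expect_mul_sum_pow_le (f := fun x : Fin r → W => (#(commonNbhd G x) : ℝ))
    (fun _ => Nat.cast_nonneg _) (r - 1)
  rw [Nat.sub_add_cancel (Nat.one_le_iff_ne_zero.2 hr)] at hmean
  have hD := meanCodegree_nonneg G r
  calc meanCodegree G r * ∑ x : Fin r → W with ¬ Function.Injective x,
        (#(commonNbhd G x) : ℝ) ^ r
      ≤ meanCodegree G r * ∑ y : Fin r → W, (r : ℝ) ^ 2 * (#(commonNbhd G y) : ℝ) ^ (r - 1) := by
        gcongr
        exact_mod_cast hcount
    _ = (r : ℝ) ^ 2 *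
        (meanCodegree G r * ∑ y : Fin r → W, (#(commonNbhd G y) : ℝ) ^ (r - 1)) := by
        rw [← mul_sum]
        ring
    _ ≤ (r : ℝ) ^ 2 * ∑ x : Fin r → W, (#(commonNbhd G x) : ℝ) ^ r := by
        gcongr
        exact hmean

/-- The `r`-tuples that cannot serve as parent tuples with `l` further generations below them:
at level `0` those with a repeated entry or with fewer than `τ` common neighbours, and at level
`l + 1` moreover those for which a proportion greater than `δ` of the `r`-tuples of common
neighbours is bad at level `l`. -/
noncomputable def badTuples (r : ℕ) (τ δ : ℝ) : ℕ → Finset (Fin r → W)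
  | 0 => {x | ¬ Function.Injective x ∨ (#(commonNbhd G x) : ℝ) < τ}
  | l + 1 => badTuples r τ δ l ∪ univ.filter fun x => δ * (#(commonNbhd G x) : ℝ) ^ r <
      #{y ∈ Fintype.piFinset fun _ : Fin r => commonNbhd G x | y ∈ badTuples r τ δ l}

variable {τ δ : ℝ} {l : ℕ} {x : Fin r → W}

theorem badTuples_mono : Monotone (badTuples G r τ δ) :=
  monotone_nat_of_le_succ fun _ => subset_union_left

variable {G} in
theorem injective_of_notMem_badTuples (hx : x ∉ badTuples G r τ δ l) : Function.Injective x := by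
  have hx0 : x ∉ badTuples G r τ δ 0 := fun h => hx (badTuples_mono G l.zero_le h)
  simp only [badTuples, mem_filter_univ, not_or, not_not] at hx0
  exact hx0.1

variable {G} in
theorem le_card_commonNbhd_of_notMem_badTuples (hx : x ∉ badTuples G r τ δ l) :
    τ ≤ #(commonNbhd G x) := by
  have hx0 : x ∉ badTuples G r τ δ 0 := fun h => hx (badTuples_mono G l.zero_le h)
  simp only [badTuples, mem_filter_univ, not_or, not_lt] at hx0
  exact hx0.2

variable {G} in
theorem card_filter_mem_badTuples_le (hx : x ∉ badTuples G r τ δ (l + 1)) :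
    (#{y ∈ Fintype.piFinset fun _ : Fin r => commonNbhd G x | y ∈ badTuples G r τ δ l} : ℝ) ≤
      δ * (#(commonNbhd G x) : ℝ) ^ r := by
  rw [badTuples, mem_union, not_or, mem_filter_univ, not_lt] at hx
  exact hx.2

theorem sum_badTuples_zero_le (hr : r ≠ 0) (hD : 0 < meanCodegree G r) {ε : ℝ} (hε : 0 ≤ ε)
    (hε1 : ε ≤ 1) :
    ∑ x ∈ badTuples G r (ε * meanCodegree G r) δ 0, (#(commonNbhd G x) : ℝ) ^ r ≤
      (ε + r ^ 2 / meanCodegree G r) * ∑ x : Fin r → W, (#(commonNbhd G x) : ℝ) ^ r := by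
  have hrepeat : ∑ x : Fin r → W with ¬ Function.Injective x, (#(commonNbhd G x) : ℝ) ^ r ≤
      r ^ 2 / meanCodegree G r * ∑ x : Fin r → W, (#(commonNbhd G x) : ℝ) ^ r := by
    rw [div_mul_eq_mul_div, le_div_iff₀' hD]
    exact meanCodegree_mul_sum_not_injective_le G hr
  have hlight := sum_pow_filter_card_commonNbhd_lt_le G hr hε hε1
  rw [badTuples, filter_or, add_mul]
  exact (sum_union_le_add _ _ fun _ => by positivity).trans (by linarith)

-- Markov's inequality, after exchanging the roles of the two tuples in the pairs it counts.
theorem sum_badTuples_succ_le (hδ : 0 < δ) :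
    ∑ x ∈ badTuples G r τ δ (l + 1), (#(commonNbhd G x) : ℝ) ^ r ≤
      (1 + 1 / δ) * ∑ x ∈ badTuples G r τ δ l, (#(commonNbhd G x) : ℝ) ^ r := by
  set heavy : Finset (Fin r → W) := univ.filter fun x => δ * (#(commonNbhd G x) : ℝ) ^ r <
    #{y ∈ Fintype.piFinset fun _ : Fin r => commonNbhd G x | y ∈ badTuples G r τ δ l}
  have hmarkov : ∑ x ∈ heavy, (#(commonNbhd G x) : ℝ) ^ r ≤
      1 / δ * ∑ x ∈ badTuples G r τ δ l, (#(commonNbhd G x) : ℝ) ^ r := by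
    rw [one_div_mul_eq_div, le_div_iff₀' hδ, mul_sum]
    calc ∑ x ∈ heavy, δ * (#(commonNbhd G x) : ℝ) ^ r
        ≤ ∑ x ∈ heavy, (#{y ∈ Fintype.piFinset fun _ : Fin r => commonNbhd G x |
            y ∈ badTuples G r τ δ l} : ℝ) := sum_le_sum fun x hx => (mem_filter.1 hx).2.le
      _ ≤ ∑ x : Fin r → W, (#{y ∈ Fintype.piFinset fun _ : Fin r => commonNbhd G x |
            y ∈ badTuples G r τ δ l} : ℝ) :=
          sum_le_sum_of_subset_of_nonneg (subset_univ _) fun _ _ _ => Nat.cast_nonneg _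
      _ = ∑ y ∈ badTuples G r τ δ l, (#(commonNbhd G y) : ℝ) ^ r := by
          have hdouble := sum_card_filter_mem_commonNbhd G (κ := Fin r) (badTuples G r τ δ l)
          rw [Fintype.card_fin] at hdouble
          exact_mod_cast hdouble
  rw [badTuples, one_add_mul]
  exact (sum_union_le_add _ _ fun _ => by positivity).trans (add_le_add_right hmarkov _)

theorem sum_badTuples_le (hr : r ≠ 0) (hD : 0 < meanCodegree G r) {ε : ℝ} (hε : 0 ≤ ε)
    (hε1 : ε ≤ 1) (hδ : 0 < δ) (l : ℕ) :
    ∑ x ∈ badTuples G r (ε * meanCodegree G r) δ l, (#(commonNbhd G x) : ℝ) ^ r ≤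
      (1 + 1 / δ) ^ l * ((ε + r ^ 2 / meanCodegree G r) *
        ∑ x : Fin r → W, (#(commonNbhd G x) : ℝ) ^ r) := by
  induction l with
  | zero => simpa using sum_badTuples_zero_le G hr hD hε hε1
  | succ l ih =>
    rw [pow_succ', mul_assoc]
    exact (sum_badTuples_succ_le G hδ).trans (by gcongr)

theorem sum_badTuples_le_half (hr : r ≠ 0) (hδ : 0 < δ) {ε : ℝ} (hε : 0 ≤ ε) {l : ℕ}
    (hεl : 4 * (1 + 1 / δ) ^ l * ε ≤ 1)
    (hD : 4 * (1 + 1 / δ) ^ l * (r : ℝ) ^ 2 ≤ meanCodegree G r) :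
    ∑ x ∈ badTuples G r (ε * meanCodegree G r) δ l, (#(commonNbhd G x) : ℝ) ^ r ≤
      (∑ x : Fin r → W, (#(commonNbhd G x) : ℝ) ^ r) / 2 := by
  have hD₀ : 0 < meanCodegree G r := hD.trans_lt' (by positivity)
  have hA : 1 ≤ (1 + 1 / δ) ^ l := one_le_pow₀ (le_add_of_nonneg_right (by positivity))
  have hε1 : ε ≤ 1 := by nlinarith
  have hrepeat : (1 + 1 / δ) ^ l * (r ^ 2 / meanCodegree G r) ≤ 1 / 4 := by
    rw [← mul_div_assoc, div_le_iff₀ hD₀]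
    linarith
  calc ∑ x ∈ badTuples G r (ε * meanCodegree G r) δ l, (#(commonNbhd G x) : ℝ) ^ r
      ≤ (1 + 1 / δ) ^ l * ((ε + r ^ 2 / meanCodegree G r) *
          ∑ x : Fin r → W, (#(commonNbhd G x) : ℝ) ^ r) :=
        sum_badTuples_le G hr hD₀ hε hε1 hδ l
    _ = ((1 + 1 / δ) ^ l * ε + (1 + 1 / δ) ^ l * (r ^ 2 / meanCodegree G r)) *
          ∑ x : Fin r → W, (#(commonNbhd G x) : ℝ) ^ r := by ring
    _ ≤ 1 / 2 * ∑ x : Fin r → W, (#(commonNbhd G x) : ℝ) ^ r := by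
        gcongr
        linarith
    _ = (∑ x : Fin r → W, (#(commonNbhd G x) : ℝ) ^ r) / 2 := by ring

end BadTuples

/-- A decomposition of `H` exhibiting it as a blowup of a tree with parent sets of size `r`: the
blocks are the level sets of `level`, the root block being level `0`, and the block at level
`i + 1` is completely joined to the `r` vertices listed by `parents i`, which all lie at the
earlier level `parentLevel i`. Parent sets are listed as tuples so that they can be matched with
`r`-tuples of vertices of a host graph. -/
structure TreeBlowup {V : Type*} (H : SimpleGraph V) (r m : ℕ) [NeZero m] where
  level : V → ℕ
  parents : Fin m → Fin r ↪ V
  parentLevel : Fin m → ℕ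
  level_le : ∀ v, level v ≤ m
  level_parents : ∀ i a, level (parents i a) = parentLevel i
  parentLevel_le : ∀ i, parentLevel i ≤ i
  parentLevel_ne_zero : ∀ i ≠ 0, parentLevel i ≠ 0
  range_parents_zero : Set.range (parents 0) = {v | level v = 0}
  adj_iff : ∀ u v, H.Adj u v ↔ ∃ i : Fin m,
    u ∈ Set.range (parents i) ∧ level v = i + 1 ∨ v ∈ Set.range (parents i) ∧ level u = i + 1

namespace TreeBlowup

variable {V : Type*} {H : SimpleGraph V} {r m : ℕ} [NeZero m] (T : TreeBlowup H r m)

theorem parentLevel_zero : T.parentLevel 0 = 0 := by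
  simpa using T.parentLevel_le 0

theorem exists_level_eq {v : V} (hv : T.level v ≠ 0) : ∃ i : Fin m, T.level v = i + 1 :=
  ⟨⟨T.level v - 1, by have := T.level_le v; omega⟩, by simp only; omega⟩

section VertexAndEdgeCounts

variable [Fintype V]

theorem card_level_eq_zero : #{v | T.level v = 0} = r := by
  classical
  calc #{v | T.level v = 0} = #(univ.map (T.parents 0)) := by
        congr 1
        ext v
        simpa using (Set.ext_iff.1 T.range_parents_zero v).symm
    _ = r := by simp

theorem sum_card_level_eq_succ_add : ∑ j ∈ range m, #{v | T.level v = j + 1} + r =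
    Fintype.card V := by
  have hfiber := card_eq_sum_card_fiberwise (s := (univ : Finset V)) (t := range (m + 1))
    (f := T.level) fun v _ => mem_coe.2 (mem_range.2 (Nat.lt_succ_of_le (T.level_le v)))
  rw [sum_range_succ', T.card_level_eq_zero] at hfiber
  exact hfiber.symm

theorem mul_card_sub_le_card_edgeSet (T : TreeBlowup H r m) :
    r * (Fintype.card V - r) ≤ Nat.card H.edgeSet := by
  classical
  have hcard : Fintype.card {v // ¬ T.level v = 0} = Fintype.card V - r := by
    rw [Fintype.card_subtype_compl, Fintype.card_subtype, T.card_level_eq_zero]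
  choose i hi using fun v : {v // T.level v ≠ 0} => T.exists_level_eq v.2
  have hlt (v : {v // T.level v ≠ 0}) (a : Fin r) : T.level (T.parents (i v) a) < T.level v := by
    rw [T.level_parents, hi v]
    exact Nat.lt_succ_of_le (T.parentLevel_le _)
  let edge (q : Fin r × {v // T.level v ≠ 0}) : H.edgeSet :=
    ⟨s(T.parents (i q.2) q.1, q.2), (T.adj_iff _ _).2 ⟨i q.2, .inl ⟨⟨q.1, rfl⟩, hi q.2⟩⟩⟩
  have hedge : Function.Injective edge := by
    rintro ⟨a, v⟩ ⟨b, w⟩ h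
    rcases Sym2.eq_iff.1 (Subtype.ext_iff.1 h) with ⟨hab, hvw⟩ | ⟨haw, hvb⟩
    · obtain rfl : v = w := Subtype.ext hvw
      exact Prod.ext ((T.parents (i v)).injective hab) rfl
    · have hav := hlt v a
      have hbw := hlt w b
      simp only at haw hvb
      rw [haw] at hav
      rw [← hvb] at hbw
      exact absurd hav hbw.not_gt
  simpa [hcard] using Nat.card_le_card_of_injective edge hedge

theorem card_pow_mul_density_pow_le (T : TreeBlowup H r m) {W : Type*} [Fintype W]
    (G : SimpleGraph W) [DecidableRel G.Adj] :
    (Fintype.card W : ℝ) ^ Fintype.card V *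
        (2 * (#G.edgeFinset : ℝ) / (Fintype.card W : ℝ) ^ 2) ^ Nat.card H.edgeSet ≤
      (Fintype.card W : ℝ) ^ r * meanCodegree G r ^ (Fintype.card V - r) := by
  have hrV : r ≤ Fintype.card V := le_of_add_le_right T.sum_card_level_eq_succ_add.le
  set q : ℝ := 2 * (#G.edgeFinset : ℝ) / (Fintype.card W : ℝ) ^ 2
  calc (Fintype.card W : ℝ) ^ Fintype.card V * q ^ Nat.card H.edgeSet
      ≤ (Fintype.card W : ℝ) ^ Fintype.card V * q ^ (r * (Fintype.card V - r)) := by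
        gcongr ?_ * ?_
        exact pow_le_pow_of_le_one (by positivity) (two_mul_card_edgeFinset_div_sq_le_one G)
          T.mul_card_sub_le_card_edgeSet
    _ = (Fintype.card W : ℝ) ^ r * (Fintype.card W * q ^ r) ^ (Fintype.card V - r) := by
        rw [← pow_mul_pow_sub (Fintype.card W : ℝ) hrV, pow_mul, mul_pow, mul_assoc]
    _ ≤ (Fintype.card W : ℝ) ^ r * meanCodegree G r ^ (Fintype.card V - r) := by
        gcongr
        exact card_mul_density_pow_le_meanCodegree G r

end VertexAndEdgeCounts

variable {W : Type*} [Fintype W] [DecidableEq W] {G : SimpleGraph W} [DecidableRel G.Adj]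
  {τ δ : ℝ} {w₀ : W}

/-- The parents of the block at level `i + 1`, as vertices of the block containing them. -/
def parentsInBlock {i : Fin m} {k : ℕ} (hi : T.parentLevel i = k) :
    Fin r ↪ {v // T.level v = k} :=
  ⟨fun a => ⟨T.parents i a, (T.level_parents i a).trans hi⟩,
    fun _ _ h => (T.parents i).injective (Subtype.ext_iff.1 h)⟩

variable (G τ δ w₀) in
/-- An embedding into `G` of the levels up to `k` of `H` all of whose parent tuples are good enough
for the blocks still to be embedded below them. It is encoded as a total map with the value `w₀` at
the later levels. -/
structure IsGoodPartialCopy (k : ℕ) (f : V → W) : Prop where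
  eq_of_lt_level : ∀ v, k < T.level v → f v = w₀
  injOn : Set.InjOn f {v | T.level v ≤ k}
  mem_commonNbhd : ∀ i : Fin m, (i : ℕ) < k → ∀ v, T.level v = i + 1 →
    f v ∈ commonNbhd G (f ∘ T.parents i)
  notMem_badTuples : ∀ i, T.parentLevel i ≤ k → f ∘ T.parents i ∉ badTuples G r τ δ (m - i)

variable {T}

theorem isGoodPartialCopy_zero {x : Fin r → W} (hx : x ∉ badTuples G r τ δ m) :
    T.IsGoodPartialCopy G τ δ w₀ 0 (Function.extend (T.parents 0) x fun _ => w₀) where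
  eq_of_lt_level v hv := by
    refine Function.extend_apply' _ _ _ fun hv0 => hv.ne' ?_
    exact T.range_parents_zero.subset hv0
  injOn := by
    intro u hu v hv huv
    obtain ⟨a, rfl⟩ := T.range_parents_zero.superset (Nat.le_zero.1 hu)
    obtain ⟨b, rfl⟩ := T.range_parents_zero.superset (Nat.le_zero.1 hv)
    rw [(T.parents 0).injective.extend_apply, (T.parents 0).injective.extend_apply] at huv
    rw [injective_of_notMem_badTuples hx huv]
  mem_commonNbhd i hi := absurd hi (Nat.not_lt_zero _)
  notMem_badTuples i hi := by
    obtain rfl : i = 0 := by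
      by_contra hne
      exact T.parentLevel_ne_zero i hne (Nat.le_zero.1 hi)
    rwa [Function.extend_comp (T.parents 0).injective, Fin.val_zero, Nat.sub_zero]

theorem IsGoodPartialCopy.extend {i : Fin m} {f : V → W} (hf : T.IsGoodPartialCopy G τ δ w₀ i f)
    {g : {v // T.level v = i + 1} → W} (hg : Function.Injective g)
    (hgN : ∀ v, g v ∈ commonNbhd G (f ∘ T.parents i))
    (hgf : ∀ u v, T.level v ≤ i → g u ≠ f v)
    (hbad : ∀ (j : Fin m) (hj : T.parentLevel j = i + 1),
      g ∘ T.parentsInBlock hj ∉ badTuples G r τ δ (m - (i + 1))) :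
    T.IsGoodPartialCopy G τ δ w₀ (i + 1) (Function.extend Subtype.val g f) := by
  set f' := Function.extend Subtype.val g f
  have hnew (v) (hv : T.level v = i + 1) : f' v = g ⟨v, hv⟩ :=
    Subtype.val_injective.extend_apply g f ⟨v, hv⟩
  have hold (v) (hv : T.level v ≠ i + 1) : f' v = f v :=
    Function.extend_apply' _ _ _ fun ⟨u, hu⟩ => hv (hu ▸ u.2)
  have hparents (j) (hj : T.parentLevel j ≠ i + 1) : f' ∘ T.parents j = f ∘ T.parents j :=
    funext fun a => hold _ ((T.level_parents j a).trans_ne hj)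
  refine ⟨fun v hv => ?_, fun u hu v hv huv => ?_, fun j hj v hv => ?_, fun j hj => ?_⟩
  · rw [hold v hv.ne', hf.eq_of_lt_level v (by omega)]
  · rcases eq_or_ne (T.level u) (i + 1) with hu1 | hu1 <;>
      rcases eq_or_ne (T.level v) (i + 1) with hv1 | hv1
    · rw [hnew u hu1, hnew v hv1] at huv
      exact Subtype.ext_iff.1 (hg huv)
    · rw [hnew u hu1, hold v hv1] at huv
      exact absurd huv (hgf _ _ (Nat.lt_succ_iff.1 (hv.lt_of_ne hv1)))
    · rw [hold u hu1, hnew v hv1] at huv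
      exact absurd huv.symm (hgf _ _ (Nat.lt_succ_iff.1 (hu.lt_of_ne hu1)))
    · rw [hold u hu1, hold v hv1] at huv
      exact hf.injOn (Nat.lt_succ_iff.1 (hu.lt_of_ne hu1)) (Nat.lt_succ_iff.1 (hv.lt_of_ne hv1)) huv
  · rw [hparents j (by have := T.parentLevel_le j; omega)]
    rcases (Nat.lt_succ_iff.1 hj).eq_or_lt with hji | hji
    · obtain rfl : j = i := Fin.ext hji
      exact hnew v hv ▸ hgN _
    · exact hold v (by omega) ▸ hf.mem_commonNbhd j hji v hv
  · rcases hj.eq_or_lt with hj1 | hj1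
    · have hgj : f' ∘ T.parents j = g ∘ T.parentsInBlock hj1 := funext fun a => hnew _ _
      rw [hgj]
      have := T.parentLevel_le j
      exact fun h => hbad j hj1 (badTuples_mono G (by omega) h)
    · rw [hparents j hj1.ne]
      exact hf.notMem_badTuples j (Nat.lt_succ_iff.1 hj1)

section Counting

variable [Fintype V] [DecidableEq V]

variable (T G τ δ w₀) in
open Classical in
/-- The good partial copies of the levels up to `k`, as a finite set to be counted. -/
noncomputable def goodPartialCopies (k : ℕ) : Finset (V → W) :=
  {f | T.IsGoodPartialCopy G τ δ w₀ k f}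

variable (T G τ δ) in
/-- The placements of the block at level `i + 1` by which a good partial copy `f` of the earlier
levels extends to a good partial copy. -/
noncomputable def goodExtensions (i : Fin m) (f : V → W) :
    Finset ({v // T.level v = i + 1} → W) :=
  {g ∈ Fintype.piFinset fun _ => commonNbhd G (f ∘ T.parents i) |
    Function.Injective g ∧ (∀ v, g v ∉ ({v | T.level v ≤ i} : Finset V).image f) ∧
      ∀ j : {j // T.parentLevel j = i + 1},
        g ∘ T.parentsInBlock j.2 ∉ badTuples G r τ δ (m - (i + 1))}

variable {i : Fin m}

theorem mem_goodPartialCopies {k : ℕ} {f : V → W} :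
    f ∈ T.goodPartialCopies G τ δ w₀ k ↔ T.IsGoodPartialCopy G τ δ w₀ k f := by
  simp [goodPartialCopies]

theorem IsGoodPartialCopy.half_pow_le_card_goodExtensions {f : V → W}
    (hf : T.IsGoodPartialCopy G τ δ w₀ i f) (hδ₀ : 0 ≤ δ) (hδ : m * δ ≤ 1 / 4)
    (hτ : 8 * (Fintype.card V : ℝ) ^ 2 ≤ τ) :
    (#(commonNbhd G (f ∘ T.parents i)) : ℝ) ^ #{v | T.level v = i + 1} / 2 ≤
      #(T.goodExtensions G τ δ i f) := by
  have hgood := hf.notMem_badTuples i (T.parentLevel_le i)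
  have hlarge : 8 * Fintype.card V ^ 2 ≤ #(commonNbhd G (f ∘ T.parents i)) := by
    exact_mod_cast hτ.trans (le_card_commonNbhd_of_notMem_badTuples hgood)
  have hfew : (Fintype.card {j // T.parentLevel j = i + 1} : ℝ) * δ ≤ 1 / 4 := by
    refine le_trans ?_ hδ
    gcongr
    simpa using Fintype.card_subtype_le fun j : Fin m => T.parentLevel j = i + 1
  have hblock := Fintype.card_subtype_le fun v => T.level v = i + 1
  have hused : #(({v | T.level v ≤ i} : Finset V).image f) ≤ Fintype.card V :=
    card_image_le.trans (card_le_univ _)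
  rw [show m - (i : ℕ) = m - (i + 1) + 1 by omega] at hgood
  rw [← Fintype.card_subtype]
  refine half_card_pow_le_card_injective_avoiding _ _ (fun j => T.parentsInBlock j.2) _ ?_ hfew ?_
  · simpa using card_filter_mem_badTuples_le hgood
  · calc 4 * (Fintype.card {v // T.level v = i + 1} * (Fintype.card {v // T.level v = i + 1} +
          #(({v | T.level v ≤ i} : Finset V).image f)))
        ≤ 4 * (Fintype.card V * (Fintype.card V + Fintype.card V)) := by gcongr
      _ = 8 * Fintype.card V ^ 2 := by ring
      _ ≤ #(commonNbhd G (f ∘ T.parents i)) := hlarge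

theorem sum_card_goodExtensions_le (i : Fin m) :
    ∑ f ∈ T.goodPartialCopies G τ δ w₀ i, #(T.goodExtensions G τ δ i f) ≤
      #(T.goodPartialCopies G τ δ w₀ (i + 1)) := by
  rw [← card_sigma]
  refine card_le_card_of_injOn (fun q => Function.extend Subtype.val q.2 q.1) (fun q hq => ?_)
    fun q hq q' hq' h => ?_
  · obtain ⟨hf, hg⟩ := mem_sigma.1 (mem_coe.1 hq)
    obtain ⟨hgN, hginj, hgf, hbad⟩ := mem_filter.1 hg
    refine mem_coe.2 <| mem_goodPartialCopies.2 <| (mem_goodPartialCopies.1 hf).extend hginj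
      (Fintype.mem_piFinset.1 hgN) (fun u v hv huv => hgf u ?_) fun j hj => hbad ⟨j, hj⟩
    exact mem_image.2 ⟨v, by simpa using hv, huv.symm⟩
  · obtain ⟨f, g⟩ := q
    obtain ⟨f', g'⟩ := q'
    have hf := mem_goodPartialCopies.1 (mem_sigma.1 (mem_coe.1 hq)).1
    have hf' := mem_goodPartialCopies.1 (mem_sigma.1 (mem_coe.1 hq')).1
    simp only at h hf hf'
    obtain rfl : f = f' := by
      funext v
      by_cases hv : T.level v = i + 1
      · rw [hf.eq_of_lt_level v (by omega), hf'.eq_of_lt_level v (by omega)]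
      · have hv' : ¬ ∃ u : {v // T.level v = i + 1}, u.1 = v := fun ⟨u, hu⟩ => hv (hu ▸ u.2)
        simpa only [Function.extend_apply' _ _ _ hv'] using congrFun h v
    rw [Function.extend_injective Subtype.val_injective f h]

theorem sum_compl_badTuples_le (φ : (Fin r → W) → ℝ) (hφ : ∀ x, 0 ≤ φ x) :
    ∑ x ∈ (badTuples G r τ δ m)ᶜ, φ x ≤
      ∑ f ∈ T.goodPartialCopies G τ δ w₀ 0, φ (f ∘ T.parents 0) := by
  have hinj := (T.parents 0).injective
  let base (x : Fin r → W) : V → W := Function.extend (T.parents 0) x fun _ => w₀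
  have hbase : Function.Injective base := Function.extend_injective hinj _
  calc ∑ x ∈ (badTuples G r τ δ m)ᶜ, φ x
      = ∑ x ∈ (badTuples G r τ δ m)ᶜ, φ (base x ∘ T.parents 0) := by
        simp only [base, Function.extend_comp hinj]
    _ = ∑ f ∈ (badTuples G r τ δ m)ᶜ.image base, φ (f ∘ T.parents 0) :=
        (sum_image (f := fun f => φ (f ∘ T.parents 0)) hbase.injOn).symm
    _ ≤ ∑ f ∈ T.goodPartialCopies G τ δ w₀ 0, φ (f ∘ T.parents 0) := by
        refine sum_le_sum_of_subset_of_nonneg (fun f hf => ?_) fun _ _ _ => hφ _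
        obtain ⟨x, hx, rfl⟩ := mem_image.1 hf
        exact mem_goodPartialCopies.2 (isGoodPartialCopy_zero (mem_compl.1 hx))

theorem half_sum_pow_le_card_goodPartialCopies_succ (hδ₀ : 0 ≤ δ) (hδ : m * δ ≤ 1 / 4)
    (hτ : 8 * (Fintype.card V : ℝ) ^ 2 ≤ τ) (i : Fin m) :
    (∑ f ∈ T.goodPartialCopies G τ δ w₀ i,
        (#(commonNbhd G (f ∘ T.parents i)) : ℝ) ^ #{v | T.level v = i + 1}) / 2 ≤
      #(T.goodPartialCopies G τ δ w₀ (i + 1)) := by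
  rw [sum_div]
  refine (sum_le_sum fun f hf =>
    (mem_goodPartialCopies.1 hf).half_pow_le_card_goodExtensions hδ₀ hδ hτ).trans ?_
  exact_mod_cast sum_card_goodExtensions_le i

theorem half_card_mul_pow_le_card_goodPartialCopies_succ (hδ₀ : 0 ≤ δ) (hδ : m * δ ≤ 1 / 4)
    (hτ : 8 * (Fintype.card V : ℝ) ^ 2 ≤ τ) (i : Fin m) :
    #(T.goodPartialCopies G τ δ w₀ i) * τ ^ #{v | T.level v = i + 1} / 2 ≤
      #(T.goodPartialCopies G τ δ w₀ (i + 1)) := by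
  have hτ₀ : 0 ≤ τ := hτ.trans' (by positivity)
  refine le_trans ?_ (half_sum_pow_le_card_goodPartialCopies_succ hδ₀ hδ hτ i)
  rw [← nsmul_eq_mul]
  gcongr
  refine card_nsmul_le_sum _ _ _ fun f hf => ?_
  gcongr
  exact le_card_commonNbhd_of_notMem_badTuples
    ((mem_goodPartialCopies.1 hf).notMem_badTuples i (T.parentLevel_le i))

theorem card_goodPartialCopies_le_card_copies :
    #(T.goodPartialCopies G τ δ w₀ m) ≤ Nat.card {f : H →g G // Function.Injective f} := by
  have hhom {f : V → W} (hf : T.IsGoodPartialCopy G τ δ w₀ m f) {u v : V} (huv : H.Adj u v) :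
      G.Adj (f u) (f v) := by
    have hedge (i : Fin m) (a : Fin r) {v : V} (hv : T.level v = i + 1) :
        G.Adj (f (T.parents i a)) (f v) :=
      mem_commonNbhd.1 (hf.mem_commonNbhd i i.2 v hv) a
    obtain ⟨i, ⟨⟨a, rfl⟩, hv⟩ | ⟨⟨a, rfl⟩, hu⟩⟩ := (T.adj_iff u v).1 huv
    exacts [hedge i a hv, (hedge i a hu).symm]
  let copy (f : T.goodPartialCopies G τ δ w₀ m) : {f : H →g G // Function.Injective f} :=
    have hf := mem_goodPartialCopies.1 f.2
    ⟨⟨f.1, hhom hf⟩, fun u v huv => hf.injOn (T.level_le u) (T.level_le v) huv⟩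
  have hcopy : Function.Injective copy := fun f f' h =>
    Subtype.ext (congrArg (fun φ => (φ.1 : V → W)) h)
  simpa using Nat.card_le_card_of_injective copy hcopy

theorem card_pow_mul_pow_le_card_goodPartialCopies_one (hδ₀ : 0 ≤ δ) (hδ : m * δ ≤ 1 / 4)
    (hτ : 8 * (Fintype.card V : ℝ) ^ 2 ≤ τ) (hτD : τ ≤ meanCodegree G r)
    (hlight : ∑ x ∈ badTuples G r τ δ m, (#(commonNbhd G x) : ℝ) ^ r ≤
      (∑ x : Fin r → W, (#(commonNbhd G x) : ℝ) ^ r) / 2)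
    (hblock : r ≤ #{v | T.level v = 1}) :
    (Fintype.card W : ℝ) ^ r * τ ^ #{v | T.level v = 1} / 4 ≤
      #(T.goodPartialCopies G τ δ w₀ 1) := by
  have hτ₀ : 0 ≤ τ := hτ.trans' (by positivity)
  have hmean : (Fintype.card W : ℝ) ^ r * τ ^ r ≤
      ∑ x : Fin r → W, (#(commonNbhd G x) : ℝ) ^ r :=
    calc (Fintype.card W : ℝ) ^ r * τ ^ r
        ≤ meanCodegree G r ^ r * Fintype.card (Fin r → W) := by
          rw [mul_comm, Fintype.card_fun, Fintype.card_fin, Nat.cast_pow]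
          gcongr
      _ ≤ _ := expect_pow_mul_card_le (fun _ => Nat.cast_nonneg _) r
  rw [← sum_add_sum_compl (badTuples G r τ δ m)] at hmean hlight
  have hheavy : (Fintype.card W : ℝ) ^ r * τ ^ r / 2 ≤
      ∑ x ∈ (badTuples G r τ δ m)ᶜ, (#(commonNbhd G x) : ℝ) ^ r := by
    linarith
  calc (Fintype.card W : ℝ) ^ r * τ ^ #{v | T.level v = 1} / 4
      = (Fintype.card W : ℝ) ^ r * τ ^ r / 2 * τ ^ (#{v | T.level v = 1} - r) / 2 := by
        rw [← pow_mul_pow_sub τ hblock]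
        ring
    _ ≤ (∑ x ∈ (badTuples G r τ δ m)ᶜ, (#(commonNbhd G x) : ℝ) ^ #{v | T.level v = 1}) / 2 := by
        gcongr
        refine (mul_le_mul_of_nonneg_right hheavy (by positivity)).trans ?_
        rw [sum_mul]
        refine sum_le_sum fun x hx => ?_
        rw [← pow_mul_pow_sub (#(commonNbhd G x) : ℝ) hblock]
        gcongr
        exact le_card_commonNbhd_of_notMem_badTuples (mem_compl.1 hx)
    _ ≤ (∑ f ∈ T.goodPartialCopies G τ δ w₀ 0,
          (#(commonNbhd G (f ∘ T.parents 0)) : ℝ) ^ #{v | T.level v = 1}) / 2 := by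
        gcongr
        exact sum_compl_badTuples_le (fun x => (#(commonNbhd G x) : ℝ) ^ #{v | T.level v = 1})
          fun _ => by positivity
    _ ≤ #(T.goodPartialCopies G τ δ w₀ 1) := by
        simpa using half_sum_pow_le_card_goodPartialCopies_succ (T := T) (w₀ := w₀) hδ₀ hδ hτ 0

theorem card_pow_mul_pow_le_card_goodPartialCopies (hδ₀ : 0 ≤ δ) (hδ : m * δ ≤ 1 / 4)
    (hτ : 8 * (Fintype.card V : ℝ) ^ 2 ≤ τ) (hτD : τ ≤ meanCodegree G r)
    (hlight : ∑ x ∈ badTuples G r τ δ m, (#(commonNbhd G x) : ℝ) ^ r ≤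
      (∑ x : Fin r → W, (#(commonNbhd G x) : ℝ) ^ r) / 2)
    (hblock : r ≤ #{v | T.level v = 1}) {k : ℕ} (hk : 1 ≤ k) (hkm : k ≤ m) :
    (Fintype.card W : ℝ) ^ r * τ ^ (∑ j ∈ range k, #{v | T.level v = j + 1}) / 2 ^ (k + 1) ≤
      #(T.goodPartialCopies G τ δ w₀ k) := by
  have hτ₀ : 0 ≤ τ := hτ.trans' (by positivity)
  induction k, hk using Nat.le_induction with
  | base =>
    norm_num
    exact card_pow_mul_pow_le_card_goodPartialCopies_one hδ₀ hδ hτ hτD hlight hblock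
  | succ k _ ih =>
    refine le_trans ?_ (half_card_mul_pow_le_card_goodPartialCopies_succ hδ₀ hδ hτ ⟨k, hkm⟩)
    rw [sum_range_succ, pow_add τ, pow_succ _ (k + 1), ← mul_assoc, ← div_div,
      mul_div_right_comm]
    gcongr
    exact ih (by omega)

end Counting

theorem exists_mul_pow_le_card_copies [Fintype V] (T : TreeBlowup H r m) (hr : r ≠ 0)
    (hblock : r ≤ #{v | T.level v = 1}) :
    ∃ c c' : ℝ, 0 < c ∧ 0 < c' ∧ ∀ (W : Type*) [Fintype W] [Nonempty W] (G : SimpleGraph W)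
      [DecidableRel G.Adj], c ≤ meanCodegree G r →
        c' * (Fintype.card W : ℝ) ^ r * meanCodegree G r ^ (Fintype.card V - r) ≤
          Nat.card {f : H →g G // Function.Injective f} := by
  classical
  have hm : (0 : ℝ) < m := Nat.cast_pos.2 (NeZero.pos m)
  have hsum := T.sum_card_level_eq_succ_add
  have hrV : r ≤ Fintype.card V := by omega
  have hV : (0 : ℝ) < Fintype.card V := Nat.cast_pos.2 (by omega)
  set δ : ℝ := 1 / (4 * m)
  have hδ : 0 < δ := by positivity
  set A : ℝ := (1 + 1 / δ) ^ m
  have hA : 1 ≤ A := one_le_pow₀ (le_add_of_nonneg_right (by positivity))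
  refine ⟨32 * A * (Fintype.card V : ℝ) ^ 2,
    (1 / (4 * A)) ^ (Fintype.card V - r) / 2 ^ (m + 1), by positivity, by positivity,
    fun W _ _ G _ hD => ?_⟩
  have hlight := sum_badTuples_le_half G hr hδ (ε := 1 / (4 * A)) (l := m) (by positivity)
    (mul_one_div_cancel (by positivity)).le <| hD.trans' <| by
      gcongr
      norm_num
  have hτ : 8 * (Fintype.card V : ℝ) ^ 2 ≤ 1 / (4 * A) * meanCodegree G r := by
    rw [one_div_mul_eq_div, le_div_iff₀ (by positivity)]
    linarith
  have hτD : 1 / (4 * A) * meanCodegree G r ≤ meanCodegree G r :=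
    mul_le_of_le_one_left (meanCodegree_nonneg G r)
      (div_le_one_of_le₀ (by linarith) (by positivity))
  have hcount := card_pow_mul_pow_le_card_goodPartialCopies (T := T)
    (w₀ := Classical.arbitrary W) hδ.le (by simp only [δ]; field_simp; norm_num) hτ hτD hlight
    hblock (NeZero.one_le (n := m)) le_rfl
  rw [Nat.eq_sub_of_add_eq hsum, mul_pow] at hcount
  refine (le_of_eq_of_le ?_ hcount).trans (mod_cast card_goodPartialCopies_le_card_copies)
  ring

end TreeBlowup

namespace BlockRep

variable {VH : Type} [Fintype VH] [DecidableEq VH] {H : SimpleGraph VH} {r m : ℕ}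
  (R : BlockRep H m)

/-- The index of the block containing `v`. -/
noncomputable def blockIndex (v : VH) : Fin (m + 1) := (R.partition v).choose

variable {R} in
theorem mem_B_iff {v : VH} {i : Fin (m + 1)} : v ∈ R.B i ↔ R.blockIndex v = i :=
  ⟨fun h => ((R.partition v).choose_spec.2 i h).symm, fun h => h ▸ (R.partition v).choose_spec.1⟩

theorem val_one (R : BlockRep H m) : ((1 : Fin (m + 1)) : ℕ) = 1 := by
  rw [Fin.val_one', Nat.mod_eq_of_lt (Nat.lt_succ_of_le R.hm)]

theorem neZero (R : BlockRep H m) : NeZero m := ⟨Nat.one_le_iff_ne_zero.1 R.hm⟩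

variable [NeZero m]

theorem P_succ_zero : R.P (Fin.succ 0) = R.B 0 := by
  rw [Fin.succ_zero_eq_one', R.P_one]

theorem two_le_val_succ {i : Fin m} (hi : i ≠ 0) : 2 ≤ (i.succ : ℕ) := by
  simpa [Nat.one_le_iff_ne_zero] using hi

theorem card_P_succ (hB0 : #(R.B 0) = r) (hPr : ∀ i : Fin (m + 1), 2 ≤ (i : ℕ) → #(R.P i) = r)
    (i : Fin m) : #(R.P i.succ) = r := by
  rcases eq_or_ne i 0 with rfl | hi
  · rw [P_succ_zero, hB0]
  · exact hPr _ (two_le_val_succ hi)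

variable (hB0 : #(R.B 0) = r) (hPr : ∀ i : Fin (m + 1), 2 ≤ (i : ℕ) → #(R.P i) = r)

/-- The parent set of the block `B (i + 1)`, listed as a tuple in an arbitrary order. -/
noncomputable def parentTuple (i : Fin m) : Fin r ↪ VH :=
  ((R.P i.succ).equivFinOfCardEq (R.card_P_succ hB0 hPr i)).symm.toEmbedding.trans (.subtype _)

theorem mem_range_parentTuple {i : Fin m} {v : VH} :
    v ∈ Set.range (R.parentTuple hB0 hPr i) ↔ v ∈ R.P i.succ :=
  ⟨fun ⟨_, ha⟩ => ha ▸ Subtype.prop _,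
    fun hv => ⟨(R.P i.succ).equivFinOfCardEq (R.card_P_succ hB0 hPr i) ⟨v, hv⟩,
      by simp [parentTuple]⟩⟩

/-- The level structure of a block representation all of whose parent sets have size `r`. -/
noncomputable def toTreeBlowup : TreeBlowup H r m where
  level v := R.blockIndex v
  parents := R.parentTuple hB0 hPr
  parentLevel i := if i = 0 then 0 else R.γ i.succ
  level_le v := Nat.lt_succ_iff.1 (R.blockIndex v).2
  level_parents i a := by
    have ha : R.parentTuple hB0 hPr i a ∈ R.P i.succ :=
      (R.mem_range_parentTuple hB0 hPr).1 ⟨a, rfl⟩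
    split_ifs with hi
    · rw [hi, P_succ_zero, mem_B_iff] at ha
      rw [hi, ha, Fin.val_zero]
    · rw [mem_B_iff.1 (R.P_subset _ (two_le_val_succ hi) ha)]
  parentLevel_le i := by
    split_ifs with hi
    · exact Nat.zero_le _
    · exact Nat.lt_succ_iff.1 (R.γ_lt _ (two_le_val_succ hi)).2
  parentLevel_ne_zero i hi := by
    rw [if_neg hi]
    exact Nat.one_le_iff_ne_zero.1 (R.γ_lt _ (two_le_val_succ hi)).1
  range_parents_zero := by
    ext v
    rw [mem_range_parentTuple, P_succ_zero, mem_B_iff]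
    exact Fin.ext_iff
  adj_iff u v := by
    have hlevel (w : VH) (i : Fin m) : (R.blockIndex w : ℕ) = i + 1 ↔ w ∈ R.B i.succ := by
      rw [mem_B_iff, Fin.ext_iff, Fin.val_succ]
    simp only [R.adj_iff, Fin.exists_fin_succ, mem_range_parentTuple, hlevel]
    simp

theorem card_level_toTreeBlowup_eq_one : #{v | (R.toTreeBlowup hB0 hPr).level v = 1} =
    #(R.B 1) := by
  congr 1
  ext v
  rw [mem_filter_univ, mem_B_iff, Fin.ext_iff, R.val_one]
  rfl

end BlockRep

theorem blowup_of_tree_count_general.{u} {VH : Type} [Fintype VH] [DecidableEq VH]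
    (H : SimpleGraph VH) (r m : ℕ) (R : BlockRep H m) (hB0 : (R.B 0).card = r)
    (hB1 : r ≤ (R.B 1).card)
    (hPr : ∀ i : Fin (m + 1), 2 ≤ (i : ℕ) → (R.P i).card = r) :
    ∃ c c' C : ℝ, 0 < c ∧ 0 < c' ∧ 0 < C ∧
      (∀ (W : Type u) [Fintype W] [Nonempty W] (G : SimpleGraph W) [DecidableRel G.Adj],
        (∑ v : W, (G.degree v : ℝ) ^ r) ≥ c * (Fintype.card W : ℝ) ^ r →
          c' * (Fintype.card W : ℝ) ^ (Fintype.card VH) *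
              (2 * (G.edgeFinset.card : ℝ) / (Fintype.card W : ℝ) ^ 2) ^
                (Nat.card H.edgeSet) ≤
            (Nat.card {f : H →g G // Function.Injective f} : ℝ)) ∧
      (∀ (W : Type u) [Fintype W] [Nonempty W] (G : SimpleGraph W) [DecidableRel G.Adj],
        (∀ f : H →g G, ¬ Function.Injective f) →
          (G.edgeFinset.card : ℝ) ≤ C * (Fintype.card W : ℝ) ^ ((2 : ℝ) - 1 / r)) := by
  have := R.neZero
  have hr : r ≠ 0 := hB0 ▸ (R.B_nonempty 0).card_ne_zero
  let T := R.toTreeBlowup hB0 hPr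
  have hblock : r ≤ #{v | T.level v = 1} := (R.card_level_toTreeBlowup_eq_one hB0 hPr).symm ▸ hB1
  obtain ⟨c, c', hc, hc', hcount⟩ := T.exists_mul_pow_le_card_copies hr hblock
  refine ⟨c, c', c ^ (1 / r : ℝ), hc, hc', by positivity, fun W _ _ G _ hG => ?_,
    fun W _ _ G _ hfree => card_edgeFinset_le_of_meanCodegree_le G hr ?_⟩
  · have hD : c ≤ meanCodegree G r := by
      rwa [meanCodegree_eq_sum_degree_pow_div, le_div_iff₀ (by positivity)]
    refine le_trans ?_ (hcount W G hD)
    rw [mul_assoc, mul_assoc]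
    gcongr c' * ?_
    exact T.card_pow_mul_density_pow_le G
  · by_contra! hD
    have : IsEmpty {f : H →g G // Function.Injective f} := ⟨fun f => hfree f.1 f.2⟩
    have hpos := hcount W G hD.le
    rw [Nat.card_of_isEmpty, Nat.cast_zero] at hpos
    exact hpos.not_gt (by have := hc.trans hD; positivity)

/-- **Corollary 1.10.** Let `r ≤ t` and let `H` be an `(r,t)`-blowup of a tree
(a tree-degenerate graph whose root block has size `r`, whose non-root blocks have
size `t`, and whose parent sets all have size `r`) with `h` vertices. There exist
constants `c, c' > 0` such that every `n`-vertex graph `G` with `∑_v d(v)^r ≥ c n^r`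
contains at least `c' n^h (2e(G)/n²)^{e(H)}` labeled injective copies of `H`.
In particular `ex(n, H) = O(n^{2-1/r})`: there is `C > 0` such that every `n`-vertex
graph with no (injective) copy of `H` has at most `C n^{2-1/r}` edges. -/
theorem blowup_of_tree_count {VH : Type} [Fintype VH] [DecidableEq VH]
    (H : SimpleGraph VH) (r t m : ℕ) (hr : 1 ≤ r) (hrt : r ≤ t)
    (R : BlockRep H m) (hB0 : (R.B 0).card = r)
    (hBt : ∀ i : Fin (m + 1), 1 ≤ (i : ℕ) → (R.B i).card = t)
    (hPr : ∀ i : Fin (m + 1), 2 ≤ (i : ℕ) → (R.P i).card = r) :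
    ∃ c c' C : ℝ, 0 < c ∧ 0 < c' ∧ 0 < C ∧
      (∀ (W : Type) [Fintype W] [Nonempty W] (G : SimpleGraph W) [DecidableRel G.Adj],
        (∑ v : W, (G.degree v : ℝ) ^ r) ≥ c * (Fintype.card W : ℝ) ^ r →
          c' * (Fintype.card W : ℝ) ^ (Fintype.card VH) *
              (2 * (G.edgeFinset.card : ℝ) / (Fintype.card W : ℝ) ^ 2) ^
                (Nat.card H.edgeSet) ≤
            (Nat.card {f : H →g G // Function.Injective f} : ℝ)) ∧
      (∀ (W : Type) [Fintype W] [Nonempty W] (G : SimpleGraph W) [DecidableRel G.Adj],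
        (∀ f : H →g G, ¬ Function.Injective f) →
          (G.edgeFinset.card : ℝ) ≤ C * (Fintype.card W : ℝ) ^ ((2 : ℝ) - 1 / r)) :=
  blowup_of_tree_count_general H r m R hB0 (hrt.trans_eq (hBt 1 R.val_one.ge).symm) hPr
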